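/- arXiv:2004.00083 — 2 statements merged into one kernel-verified Lean document; each statement's English description precedes it below -/
import Mathlib

section
/- Suppose φ = g − h is lower bounded, let γ > 0, 0 < λ < 2, and let the sequences be generated by u^k = prox_{γh}(s^k), v^k = prox_{γg}(s^k), s^{k+1} = s^k + λ(v^k − u^k) from any s^0 ∈ ℝ^p. Then Σ_{k=0}^∞ ‖u^k − v^k‖² < ∞, and consequently min_{i≤k} ‖u^i − v^i‖ = o(1/√k), i.e., (k+1)·min_{i≤k} ‖u^i − v^i‖² → 0 as k → ∞. -/
/-!
The envelope `φ_γ = g^γ − h^γ` is a Lyapunov function for the iteration. As an infimum of quadratics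
of curvature `1/γ`, `g^γ` lies below its quadratic model of slope `(s − v)/γ` at `s`; since `h` is
convex, so is `h^γ`, which therefore lies above its affine model of slope `(s − u)/γ`. Subtracting
the two along the step `s' − s = λ(v − u)` gives
`φ_γ(s') ≤ φ_γ(s) − λ(2 − λ)/(2γ) ‖u − v‖²`, while any lower bound of `φ` is one of `φ_γ`. Hence
the squared residuals are summable, and their running minima, being antitone and summable, are
`o(1/k)`.
-/

open scoped InnerProductSpace
noncomputable section

/-- `ℝ^p` as a Euclidean space. -/
abbrev Euc (p : ℕ) := EuclideanSpace ℝ (Fin p)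

variable {p : ℕ}

/-- `f : ℝ^p → ℝ ∪ {∞}` (modelled with `EReal` values never equal to `-∞`) is proper. -/
def ProperFun (f : Euc p → EReal) : Prop :=
  (∀ x, f x ≠ ⊥) ∧ (∃ x, f x ≠ ⊤)

/-- Convexity for extended-real-valued functions. -/
def ConvexFun (f : Euc p → EReal) : Prop :=
  ∀ x y : Euc p, ∀ t : ℝ, 0 ≤ t → t ≤ 1 →
    f (t • x + (1 - t) • y) ≤ (t : EReal) * f x + ((1 - t : ℝ) : EReal) * f y

/-- The convex subdifferential `∂f(x)`. -/
def Subdiff (f : Euc p → EReal) (x : Euc p) : Set (Euc p) :=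
  {v | ∀ z, f x + ((⟪v, z - x⟫_ℝ : ℝ) : EReal) ≤ f z}

/-- `u` minimizes `w ↦ f(w) + (1/(2γ))‖w − x‖²`. -/
def ProxObjMin (f : Euc p → EReal) (γ : ℝ) (x u : Euc p) : Prop :=
  ∀ w, f u + ((1/(2*γ) * ‖u - x‖^2 : ℝ) : EReal) ≤ f w + ((1/(2*γ) * ‖w - x‖^2 : ℝ) : EReal)

/-- `u = prox_{γf}(x)`: `u` is the unique minimizer of `w ↦ f(w) + (1/(2γ))‖w − x‖²`. -/
def IsProxOf (f : Euc p → EReal) (γ : ℝ) (x u : Euc p) : Prop :=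
  ProxObjMin f γ x u ∧ ∀ w, ProxObjMin f γ x w → w = u

/-- The Moreau envelope `f^γ(x) = inf_w { f(w) + (1/(2γ))‖w − x‖² }`, as an extended real. -/
def moreau (f : Euc p → EReal) (γ : ℝ) (x : Euc p) : EReal :=
  ⨅ w : Euc p, f w + ((1/(2*γ) * ‖w - x‖^2 : ℝ) : EReal)

/-- The (real-valued) Moreau envelope. -/
def moreauR (f : Euc p → EReal) (γ : ℝ) (x : Euc p) : ℝ := (moreau f γ x).toReal

/-- The DC envelope `φ_γ = g^γ − h^γ`. -/
def dce (g h : Euc p → EReal) (γ : ℝ) (s : Euc p) : ℝ := moreauR g γ s - moreauR h γ s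

/-- The DC function `φ = g − h`, with the convention `∞ − ∞ = ∞`. -/
def dcVal (g h : Euc p → EReal) (x : Euc p) : EReal :=
  if g x = ⊤ then ⊤ else g x - h x

open Filter Topology

section Sequences

lemma summable_of_le_sub_succ {F a : ℕ → ℝ} {c : ℝ} (ha : ∀ k, 0 ≤ a k)
    (hdecr : ∀ k, a k ≤ F k - F (k + 1)) (hF : ∀ k, c ≤ F k) : Summable a :=
  summable_of_sum_range_le ha fun n =>
    calc ∑ k ∈ Finset.range n, a k
        ≤ ∑ k ∈ Finset.range n, (F k - F (k + 1)) := Finset.sum_le_sum fun k _ => hdecr k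
      _ = F 0 - F n := Finset.sum_range_sub' F n
      _ ≤ F 0 - c := sub_le_sub_left (hF n) _

lemma tendsto_natCast_mul_of_antitone_of_summable {a : ℕ → ℝ} (hanti : Antitone a)
    (hsum : Summable a) : Tendsto (fun n : ℕ => (n : ℝ) * a n) atTop (𝓝 0) := by
  have hnonneg : ∀ n, 0 ≤ a n := hanti.le_of_tendsto hsum.tendsto_atTop_zero
  let S : ℕ → ℝ := fun n => ∑ i ∈ Finset.range n, a i
  have hS : Tendsto S atTop (𝓝 (∑' i, a i)) := hsum.hasSum.tendsto_sum_nat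
  have htail : Tendsto (fun n => 2 * (S n - S (n / 2))) atTop (𝓝 0) := by
    simpa using (hS.sub (hS.comp (Nat.tendsto_div_const_atTop two_ne_zero))).const_mul 2
  refine squeeze_zero (fun n => mul_nonneg n.cast_nonneg (hnonneg n)) (fun n => ?_) htail
  have hcard : (n : ℝ) ≤ 2 * (n - n / 2 : ℕ) := by
    have : n ≤ 2 * (n - n / 2) := by omega
    exact_mod_cast this
  have hblock : (n - n / 2 : ℕ) * a n ≤ S n - S (n / 2) :=
    calc (n - n / 2 : ℕ) * a n
        = ∑ _i ∈ Finset.Ico (n / 2) n, a n := by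
          rw [Finset.sum_const, Nat.card_Ico, nsmul_eq_mul]
      _ ≤ ∑ i ∈ Finset.Ico (n / 2) n, a i :=
          Finset.sum_le_sum fun i hi => hanti (Finset.mem_Ico.1 hi).2.le
      _ = S n - S (n / 2) := Finset.sum_Ico_eq_sub a (Nat.div_le_self n 2)
  calc (n : ℝ) * a n ≤ 2 * (n - n / 2 : ℕ) * a n := mul_le_mul_of_nonneg_right hcard (hnonneg n)
    _ = 2 * ((n - n / 2 : ℕ) * a n) := mul_assoc _ _ _
    _ ≤ 2 * (S n - S (n / 2)) := mul_le_mul_of_nonneg_left hblock zero_le_two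

lemma tendsto_succ_mul_iInf_of_summable {a : ℕ → ℝ} (ha : ∀ k, 0 ≤ a k) (hsum : Summable a) :
    Tendsto (fun k : ℕ => ((k : ℝ) + 1) * ⨅ i : Fin (k + 1), a i) atTop (𝓝 0) := by
  let m : ℕ → ℝ := fun k => ⨅ i : Fin (k + 1), a i
  have hm_le : ∀ {i k : ℕ}, i ≤ k → m k ≤ a i := fun {i k} hik =>
    ciInf_le (f := fun j : Fin (k + 1) => a j) (Set.finite_range _).bddBelow
      ⟨i, Nat.lt_succ_of_le hik⟩
  have hm_anti : Antitone m := fun k l hkl =>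
    le_ciInf fun i => hm_le ((Nat.le_of_lt_succ i.isLt).trans hkl)
  have hm_sum : Summable m :=
    hsum.of_nonneg_of_le (fun _ => Real.iInf_nonneg fun i => ha i) fun _ => hm_le le_rfl
  simpa [m, add_mul] using
    (tendsto_natCast_mul_of_antitone_of_summable hm_anti hm_sum).add hm_sum.tendsto_atTop_zero

end Sequences

lemma add_sq_norm_sub_le_of_strongConvexOn_of_isMinOn {E : Type*} [NormedAddCommGroup E]
    [NormedSpace ℝ E] {D : Set E} {f : E → ℝ} {m : ℝ} {u w : E} (hf : StrongConvexOn D m f)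
    (hmin : IsMinOn f D u) (hu : u ∈ D) (hw : w ∈ D) : f u + m / 2 * ‖w - u‖ ^ 2 ≤ f w := by
  have hsegment : ∀ t ∈ Set.Ioo (0 : ℝ) 1, f u + (1 - t) * (m / 2 * ‖w - u‖ ^ 2) ≤ f w := by
    rintro t ⟨ht0, ht1⟩
    have hmem : t • w + (1 - t) • u ∈ D := hf.1 hw hu ht0.le (by linarith) (by ring)
    have hmin_le := isMinOn_iff.1 hmin _ hmem
    have hconv := hf.2 hw hu ht0.le (by linarith : (0 : ℝ) ≤ 1 - t) (by ring)
    simp only [smul_eq_mul] at hconv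
    refine le_of_mul_le_mul_left ?_ ht0
    linarith
  have hlim : Tendsto (fun t : ℝ => f u + (1 - t) * (m / 2 * ‖w - u‖ ^ 2)) (𝓝[>] 0)
      (𝓝 (f u + (1 - 0) * (m / 2 * ‖w - u‖ ^ 2))) :=
    (Continuous.tendsto (by fun_prop) 0).mono_left nhdsWithin_le_nhds
  rw [sub_zero, one_mul] at hlim
  exact le_of_tendsto hlim (mem_of_superset (Ioo_mem_nhdsGT one_pos) hsegment)

section Prox

variable {E : Type*} [NormedAddCommGroup E]

/-- The function `w ↦ f(w) + (1/(2γ))‖w − x‖²` minimized by the proximal mapping. An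
extended-valued `f` is encoded here and below by its domain `D` and its real values on `D`. -/
def proxObjective (f : E → ℝ) (γ : ℝ) (x w : E) : ℝ := f w + 1 / (2 * γ) * ‖w - x‖ ^ 2

/-- `u` is a proximal point `prox_{γf}(x)` of the function `f` with domain `D`; uniqueness is not
part of the notion. -/
structure IsProxOn (D : Set E) (f : E → ℝ) (γ : ℝ) (x u : E) : Prop where
  mem : u ∈ D
  isMinOn : IsMinOn (proxObjective f γ x) D u

/-- The Moreau envelope `f^γ` of the function `f` with domain `D`; it takes the junk value `0` where
the objective is unbounded below. -/
def moreauEnvelope (D : Set E) (f : E → ℝ) (γ : ℝ) (x : E) : ℝ := sInf (proxObjective f γ x '' D)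

/-- The DC envelope `φ_γ = g^γ − h^γ` for `g` with domain `A` and `h` with domain `B`. -/
def dcEnvelope (A B : Set E) (g h : E → ℝ) (γ : ℝ) (x : E) : ℝ :=
  moreauEnvelope A g γ x - moreauEnvelope B h γ x

variable {A B D : Set E} {f g h : E → ℝ} {γ c lam : ℝ} {x x' u u' v v' w : E}

namespace IsProxOn

lemma moreauEnvelope_eq (hu : IsProxOn D f γ x u) :
    moreauEnvelope D f γ x = proxObjective f γ x u :=
  IsLeast.csInf_eq ⟨Set.mem_image_of_mem _ hu.mem, Set.forall_mem_image.2 hu.isMinOn⟩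

lemma moreauEnvelope_le (hu : IsProxOn D f γ x u) (hw : w ∈ D) :
    moreauEnvelope D f γ x ≤ proxObjective f γ x w :=
  hu.moreauEnvelope_eq.trans_le (isMinOn_iff.1 hu.isMinOn w hw)

lemma le_dcEnvelope (hAB : A ⊆ B) (hc : ∀ w ∈ A, c ≤ g w - h w)
    (hu : IsProxOn B h γ x u) (hv : IsProxOn A g γ x v) : c ≤ dcEnvelope A B g h γ x :=
  calc c ≤ g v - h v := hc v hv.mem
    _ = proxObjective g γ x v - proxObjective h γ x v := by simp only [proxObjective]; ring
    _ ≤ dcEnvelope A B g h γ x :=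
      sub_le_sub hv.moreauEnvelope_eq.ge (hu.moreauEnvelope_le (hAB hv.mem))

end IsProxOn

variable [InnerProductSpace ℝ E]

lemma strongConvexOn_proxObjective (hf : ConvexOn ℝ D f) (γ : ℝ) (x : E) :
    StrongConvexOn D γ⁻¹ (proxObjective f γ x) := by
  rw [strongConvexOn_iff_convex]
  have haffine : ConvexOn ℝ D fun w => (-γ⁻¹ • innerSL ℝ x) w + γ⁻¹ / 2 * ‖x‖ ^ 2 :=
    ((-γ⁻¹ • innerSL ℝ x).toLinearMap.convexOn hf.1).add_const _
  refine (hf.add haffine).congr fun w _ => ?_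
  simp only [proxObjective, Pi.add_apply, smul_apply, innerSL_apply_apply, smul_eq_mul,
    norm_sub_sq_real, real_inner_comm w x]
  ring

namespace IsProxOn

lemma moreauEnvelope_le_quadratic (hu : IsProxOn D f γ x u) (hu' : IsProxOn D f γ x' u') :
    moreauEnvelope D f γ x' ≤
      moreauEnvelope D f γ x + γ⁻¹ * ⟪x - u, x' - x⟫_ℝ + γ⁻¹ / 2 * ‖x' - x‖ ^ 2 := by
  have hexpand : ‖u - x'‖ ^ 2 = ‖u - x‖ ^ 2 + 2 * ⟪x - u, x' - x⟫_ℝ + ‖x' - x‖ ^ 2 := by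
    rw [norm_sub_rev u x', norm_sub_rev u x, ← norm_add_sq_real, add_comm (x - u),
      sub_add_sub_cancel]
  calc moreauEnvelope D f γ x' ≤ proxObjective f γ x' u := hu'.moreauEnvelope_le hu.mem
    _ = proxObjective f γ x u + γ⁻¹ * ⟪x - u, x' - x⟫_ℝ + γ⁻¹ / 2 * ‖x' - x‖ ^ 2 := by
      rw [proxObjective, proxObjective, hexpand]; ring
    _ = _ := by rw [hu.moreauEnvelope_eq]

lemma affine_le_moreauEnvelope (hf : ConvexOn ℝ D f) (hγ : 0 < γ) (hu : IsProxOn D f γ x u)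
    (hu' : IsProxOn D f γ x' u') :
    moreauEnvelope D f γ x + γ⁻¹ * ⟪x - u, x' - x⟫_ℝ ≤ moreauEnvelope D f γ x' := by
  have hgrowth : proxObjective f γ x u + γ⁻¹ / 2 * ‖u' - u‖ ^ 2 ≤ proxObjective f γ x u' :=
    add_sq_norm_sub_le_of_strongConvexOn_of_isMinOn (strongConvexOn_proxObjective hf γ x)
      hu.isMinOn hu.mem hu'.mem
  have hsquare : ‖u' - x'‖ ^ 2 + ‖u' - u‖ ^ 2 - ‖u' - x‖ ^ 2 - 2 * ⟪x - u, x' - x⟫_ℝ =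
      ‖(u' - u) - (x' - x)‖ ^ 2 := by
    have hx' : u' - x' = ((u' - u) - (x' - x)) - (x - u) := by abel
    have hx : u' - x = (u' - u) - (x - u) := by abel
    rw [hx', hx, norm_sub_sq_real (_ - _) (x - u), norm_sub_sq_real (u' - u) (x - u),
      inner_sub_left (u' - u) (x' - x), real_inner_comm (x - u) (x' - x)]
    ring
  have hnonneg : 0 ≤ γ⁻¹ / 2 * ‖(u' - u) - (x' - x)‖ ^ 2 := by positivity
  have hshift : proxObjective f γ x' u' = proxObjective f γ x u' - γ⁻¹ / 2 * ‖u' - u‖ ^ 2 +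
      γ⁻¹ * ⟪x - u, x' - x⟫_ℝ + γ⁻¹ / 2 * ‖(u' - u) - (x' - x)‖ ^ 2 := by
    rw [← hsquare, proxObjective, proxObjective]; ring
  rw [hu.moreauEnvelope_eq, hu'.moreauEnvelope_eq]
  linarith

lemma dcEnvelope_add_le (hh : ConvexOn ℝ B h) (hγ : 0 < γ)
    (hu : IsProxOn B h γ x u) (hv : IsProxOn A g γ x v)
    (hu' : IsProxOn B h γ x' u') (hv' : IsProxOn A g γ x' v') (hx' : x' = x + lam • (v - u)) :
    dcEnvelope A B g h γ x' + lam * (2 - lam) / (2 * γ) * ‖u - v‖ ^ 2 ≤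
      dcEnvelope A B g h γ x := by
  have hg_upper := hv.moreauEnvelope_le_quadratic hv'
  have hh_lower := affine_le_moreauEnvelope hh hγ hu hu'
  have hstep : x' - x = -lam • (u - v) := by rw [hx']; module
  have hslope : ⟪x - v, x' - x⟫_ℝ - ⟪x - u, x' - x⟫_ℝ = -lam * ‖u - v‖ ^ 2 := by
    rw [← inner_sub_left, sub_sub_sub_cancel_left, hstep, inner_smul_right,
      real_inner_self_eq_norm_sq]
  have hlength : ‖x' - x‖ ^ 2 = lam ^ 2 * ‖u - v‖ ^ 2 := by
    rw [hstep, norm_smul, mul_pow, Real.norm_eq_abs, sq_abs, neg_sq]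
  calc dcEnvelope A B g h γ x' + lam * (2 - lam) / (2 * γ) * ‖u - v‖ ^ 2
      ≤ dcEnvelope A B g h γ x + γ⁻¹ * (⟪x - v, x' - x⟫_ℝ - ⟪x - u, x' - x⟫_ℝ) +
          γ⁻¹ / 2 * ‖x' - x‖ ^ 2 + lam * (2 - lam) / (2 * γ) * ‖u - v‖ ^ 2 := by
        simp only [dcEnvelope]; linarith
    _ = dcEnvelope A B g h γ x := by rw [hslope, hlength]; ring

end IsProxOn

theorem statement13_general (hh : ConvexOn ℝ B h) (hAB : A ⊆ B) (hc : ∀ w ∈ A, c ≤ g w - h w)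
    (hγ : 0 < γ) (hlam0 : 0 < lam) (hlam2 : lam < 2) {s u v : ℕ → E}
    (hu : ∀ k, IsProxOn B h γ (s k) (u k)) (hv : ∀ k, IsProxOn A g γ (s k) (v k))
    (hs : ∀ k, s (k + 1) = s k + lam • (v k - u k)) :
    Summable (fun k => ‖u k - v k‖ ^ 2) ∧
      Tendsto (fun k : ℕ => ((k : ℝ) + 1) * ⨅ i : Fin (k + 1), ‖u i - v i‖ ^ 2)
        atTop (𝓝 0) := by
  have hrate : 0 < lam * (2 - lam) / (2 * γ) :=
    div_pos (mul_pos hlam0 (sub_pos.2 hlam2)) (by positivity)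
  have hdescent : ∀ k, lam * (2 - lam) / (2 * γ) * ‖u k - v k‖ ^ 2 ≤
      dcEnvelope A B g h γ (s k) - dcEnvelope A B g h γ (s (k + 1)) := fun k =>
    le_sub_iff_add_le'.2
      (IsProxOn.dcEnvelope_add_le hh hγ (hu k) (hv k) (hu (k + 1)) (hv (k + 1)) (hs k))
  have hbound : ∀ k, c ≤ dcEnvelope A B g h γ (s k) := fun k =>
    IsProxOn.le_dcEnvelope hAB hc (hu k) (hv k)
  have hsum : Summable fun k => ‖u k - v k‖ ^ 2 :=
    (summable_mul_left_iff hrate.ne').1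
      (summable_of_le_sub_succ (fun _ => mul_nonneg hrate.le (sq_nonneg _)) hdescent hbound)
  exact ⟨hsum, tendsto_succ_mul_iInf_of_summable (a := fun k => ‖u k - v k‖ ^ 2)
    (fun _ => sq_nonneg _) hsum⟩

end Prox

section ExtendedReal

/-- The domain `dom f = {x | f x < ∞}`, on which `f` is traded for its real part `EReal.toReal`. -/
def effectiveDomain (f : Euc p → EReal) : Set (Euc p) := {x | f x ≠ ⊤}

variable {f g h : Euc p → EReal} {γ c : ℝ} {x u : Euc p}

lemma ConvexFun.convexOn_toReal (hf : ConvexFun f) (hbot : ∀ x, f x ≠ ⊥) :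
    ConvexOn ℝ (effectiveDomain f) fun x => (f x).toReal := by
  have hcomb : ∀ x ∈ effectiveDomain f, ∀ y ∈ effectiveDomain f, ∀ a b : ℝ, 0 ≤ a → 0 ≤ b →
      a + b = 1 → f (a • x + b • y) ≤ ((a * (f x).toReal + b * (f y).toReal : ℝ) : EReal) := by
    intro x hx y hy a b ha hb hab
    obtain rfl : b = 1 - a := by linarith
    have := hf x y a ha (by linarith)
    rwa [← EReal.coe_toReal hx (hbot x), ← EReal.coe_toReal hy (hbot y), ← EReal.coe_mul,
      ← EReal.coe_mul, ← EReal.coe_add] at this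
  refine ⟨fun x hx y hy a b ha hb hab => ?_, fun x hx y hy a b ha hb hab => ?_⟩
  · exact ne_top_of_le_ne_top (EReal.coe_ne_top _) (hcomb x hx y hy a b ha hb hab)
  · exact EReal.toReal_le_toReal (hcomb x hx y hy a b ha hb hab) (hbot _) (EReal.coe_ne_top _)

lemma ProxObjMin.isProxOn_toReal (hu : ProxObjMin f γ x u) (hf : ProperFun f) :
    IsProxOn (effectiveDomain f) (fun w => (f w).toReal) γ x u := by
  have hmem : f u ≠ ⊤ := by
    intro htop
    obtain ⟨w, hw⟩ := hf.2
    have hle := hu w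
    rw [htop, EReal.top_add_coe, top_le_iff, ← EReal.coe_toReal hw (hf.1 w)] at hle
    exact EReal.coe_ne_top _ hle
  refine ⟨hmem, isMinOn_iff.2 fun w hw => ?_⟩
  have hle := hu w
  rw [← EReal.coe_toReal hmem (hf.1 u), ← EReal.coe_toReal hw (hf.1 w)] at hle
  exact_mod_cast hle

lemma effectiveDomain_subset_of_le_dcVal (hc : ∀ x, (c : EReal) ≤ dcVal g h x) :
    effectiveDomain g ⊆ effectiveDomain h := by
  intro x hx htop
  have hle := hc x
  rw [dcVal, if_neg hx, htop, EReal.sub_top, le_bot_iff] at hle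
  exact EReal.coe_ne_bot c hle

lemma le_toReal_sub_toReal_of_le_dcVal (hg : ∀ x, g x ≠ ⊥) (hh : ∀ x, h x ≠ ⊥)
    (hc : ∀ x, (c : EReal) ≤ dcVal g h x) :
    ∀ x ∈ effectiveDomain g, c ≤ (g x).toReal - (h x).toReal := by
  intro x hgx
  have hhx : h x ≠ ⊤ := effectiveDomain_subset_of_le_dcVal hc hgx
  have hle := hc x
  rw [dcVal, if_neg hgx, ← EReal.coe_toReal hgx (hg x), ← EReal.coe_toReal hhx (hh x)] at hle
  exact_mod_cast hle

end ExtendedReal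

open Filter in
/-- with `φ = g − h` lower bounded, the iterates `u^k = prox_{γh}(s^k)`,
`v^k = prox_{γg}(s^k)`, `s^{k+1} = s^k + λ(v^k − u^k)` satisfy `Σ_k ‖u^k − v^k‖² < ∞` and
`(k+1)·min_{i≤k}‖u^i − v^i‖² → 0`. -/
theorem statement13
    (g h : Euc p → EReal)
    (hg_proper : ProperFun g) (hg_convex : ConvexFun g) (hg_lsc : LowerSemicontinuous g)
    (hh_proper : ProperFun h) (hh_convex : ConvexFun h) (hh_lsc : LowerSemicontinuous h)
    (hlb : ∃ c : ℝ, ∀ x, (c : EReal) ≤ dcVal g h x)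
    (γ : ℝ) (hγ : 0 < γ) (lam : ℝ) (hlam0 : 0 < lam) (hlam2 : lam < 2)
    (s u v : ℕ → Euc p)
    (hu : ∀ k, IsProxOf h γ (s k) (u k)) (hv : ∀ k, IsProxOf g γ (s k) (v k))
    (hs : ∀ k, s (k+1) = s k + lam • (v k - u k)) :
    Summable (fun k => ‖u k - v k‖^2) ∧
      Tendsto (fun k : ℕ => ((k : ℝ) + 1) * ⨅ i : Fin (k+1), ‖u i - v i‖^2)
        atTop (nhds 0) := by
  obtain ⟨c, hc⟩ := hlb
  exact statement13_general (hh_convex.convexOn_toReal hh_proper.1)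
    (effectiveDomain_subset_of_le_dcVal hc)
    (le_toReal_sub_toReal_of_le_dcVal hg_proper.1 hh_proper.1 hc) hγ hlam0 hlam2
    (fun k => (hu k).1.isProxOn_toReal hh_proper) (fun k => (hv k).1.isProxOn_toReal hg_proper) hs
end
end

section
/- Let f, g, h: ℝ^n → ℝ ∪ {∞} be proper, convex and lsc with φ = g − h − f lower bounded, let 0 < γ < 1 < δ, 0 < λ < 2(1 − γ), 0 < μ < 2(1 − δ^{-1}), and from any (s^0, t^0) generate u^k = prox_{(γδ/(δ−γ))h}((δs^k − γt^k)/(δ − γ)), v^k = prox_{γg}(s^k), z^k = prox_{δf}(t^k), s^{k+1} = s^k + λ(v^k − u^k), t^{k+1} = t^k + μ(u^k − z^k). Then min_{i≤k} ‖(u^i − v^i, u^i − z^i)‖ = o(1/√k); moreover (u^k), (v^k), (z^k) have the same set of cluster points Ω, and if (s^k, t^k) is bounded then every u⋆ ∈ Ω satisfies ∂g(u⋆) ∩ (∂f(u⋆) + ∂h(u⋆)) ≠ ∅ (hence ∂g(u⋆) ∩ ∂(f + h)(u⋆) ≠ ∅) and φ is constant on Ω. -/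
open scoped InnerProductSpace
noncomputable section

variable {p : ℕ}

/-- The DC function `φ = g − h − f`, with the convention `∞ − ∞ = ∞`. -/
def dc3Val (g h f : Euc p → EReal) (x : Euc p) : EReal :=
  if g x = ⊤ then ⊤ else g x - h x - f x

/-! The proof runs on the Lyapunov function obtained by evaluating the prox objectives at the
iterates, `E = g^γ(s) - min_w {h(w) + ‖w - s‖²/(2γ) - ‖w - t‖²/(2δ)} - f^δ(t)`.
Moving `(s, t)` by `(Δs, Δt)`, the envelope `g^γ` lies below its quadratic model, `f^δ` above its
linear one, and the middle term above a quadratic model, since `w ↦ ‖w‖²/(2γ) - ‖w‖²/(2δ)` is the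
sum of the strongly convex pieces `(1/γ - 1)‖w‖²/2` and `(1 - 1/δ)‖w‖²/2`, which absorb `Δs` and
`Δt` respectively. With the prescribed steps the linear terms add up to
`-(λ/γ)‖u - v‖² - (μ/δ)‖u - z‖²` and dominate the quadratic ones exactly when `λ < 2(1 - γ)` and
`μ < 2(1 - 1/δ)`. As `E ≥ φ(v)` is bounded below, the residuals are square summable and `E`
converges. Along convergent subsequences the closedness of `∂f`, `∂g`, `∂h` gives criticality, and
`E` tends to `φ` at the limit, so `φ` equals `lim E` at every cluster point. -/

section Limits

open Filter Topology

lemma le_of_forall_le_add_mul {a b c : ℝ} (h : ∀ τ : ℝ, 0 < τ → τ ≤ 1 → a ≤ b + τ * c) :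
    a ≤ b := by
  have hlim : Tendsto (fun τ : ℝ => b + τ * c) (𝓝[>] 0) (𝓝 b) :=
    (Continuous.tendsto' (by fun_prop) 0 b (by simp)).mono_left nhdsWithin_le_nhds
  refine ge_of_tendsto hlim ?_
  filter_upwards [Ioc_mem_nhdsGT one_pos] with τ hτ using h τ hτ.1 hτ.2

lemma summable_of_add_le_of_forall_ge {E d : ℕ → ℝ} {c : ℝ} (hd : ∀ k, 0 ≤ d k)
    (hE : ∀ k, c ≤ E k) (hdesc : ∀ k, E (k + 1) + d k ≤ E k) : Summable d := by
  refine summable_of_sum_range_le (c := E 0 - c) hd fun n => ?_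
  calc ∑ k ∈ Finset.range n, d k
      ≤ ∑ k ∈ Finset.range n, (E k - E (k + 1)) :=
        Finset.sum_le_sum fun k _ => le_sub_iff_add_le'.2 (hdesc k)
    _ = E 0 - E n := Finset.sum_range_sub' E n
    _ ≤ E 0 - c := sub_le_sub_left (hE n) _

lemma tendsto_zero_of_summable_norm_sq {E : Type*} [SeminormedAddCommGroup E] {x : ℕ → E}
    (h : Summable fun k => ‖x k‖ ^ 2) : Tendsto x atTop (𝓝 0) := by
  rw [tendsto_zero_iff_norm_tendsto_zero]
  simpa only [Real.sqrt_sq (norm_nonneg _), Real.sqrt_zero] using h.tendsto_atTop_zero.sqrt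

lemma mapClusterPt_iff_of_tendsto_sub {ι G : Type*} [TopologicalSpace G] [AddGroup G]
    [IsTopologicalAddGroup G] {l : Filter ι} {u v : ι → G}
    (h : Tendsto (fun i => u i - v i) l (𝓝 0)) (x : G) :
    MapClusterPt x l u ↔ MapClusterPt x l v := by
  simp only [mapClusterPt_iff_ultrafilter]
  refine exists_congr fun U => and_congr_right fun hU => ⟨fun hu => ?_, fun hv => ?_⟩
  · simpa using (h.mono_left hU).neg.add hu
  · simpa using (h.mono_left hU).add hv

lemma exists_tendsto_subseq_of_mapClusterPt {X Y : Type*} [TopologicalSpace X]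
    [FirstCountableTopology X] [PseudoMetricSpace Y] [ProperSpace Y] {u : ℕ → X} {w : ℕ → Y}
    {x : X} (hx : MapClusterPt x atTop u) (hw : Bornology.IsBounded (Set.range w)) :
    ∃ (y : Y) (ψ : ℕ → ℕ), StrictMono ψ ∧ Tendsto (u ∘ ψ) atTop (𝓝 x) ∧
      Tendsto (w ∘ ψ) atTop (𝓝 y) := by
  obtain ⟨ψ₁, hψ₁, hu⟩ := hx.tendsto_subseq
  obtain ⟨y, -, ψ₂, hψ₂, hy⟩ :=
    tendsto_subseq_of_bounded hw fun n => Set.mem_range_self (ψ₁ n)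
  exact ⟨y, ψ₁ ∘ ψ₂, hψ₁.comp hψ₂, hu.comp hψ₂.tendsto_atTop, hy⟩

end Limits

section InnerProduct

variable {E : Type*} [NormedAddCommGroup E] [InnerProductSpace ℝ E]

lemma norm_sub_sq_eq_sub_inner (x y w : E) :
    ‖w - x‖ ^ 2 = ‖y - x‖ ^ 2 - 2 * ⟪x - y, w - y⟫_ℝ + ‖w - y‖ ^ 2 := by
  rw [← sub_add_sub_cancel' y x w, norm_add_sq_real, ← neg_sub x y, inner_neg_left]
  ring

lemma norm_sub_sq_eq_add_of_move (x x' y y' : E) :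
    ‖y' - x'‖ ^ 2 = ‖y' - x‖ ^ 2 + 2 * ⟪x - y, x' - x⟫_ℝ - 2 * ⟪y' - y, x' - x⟫_ℝ
      + ‖x' - x‖ ^ 2 := by
  have hinner : ⟪y' - x, x' - x⟫_ℝ = ⟪y' - y, x' - x⟫_ℝ - ⟪x - y, x' - x⟫_ℝ := by
    rw [← inner_sub_left, sub_sub_sub_cancel_right]
  rw [norm_sub_rev, norm_sub_sq_eq_sub_inner y' x x', norm_sub_rev, hinner]
  ring

lemma complete_square_prox {γ : ℝ} (hγ : γ ≠ 0) (hγ1 : γ ≠ 1) (a d : E) :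
    (1 / (2 * γ) - 1 / 2) * ‖a‖ ^ 2 - γ⁻¹ * ⟪a, d⟫_ℝ + 1 / (2 * γ) * ‖d‖ ^ 2
      = (1 - γ) / (2 * γ) * ‖a - (1 - γ)⁻¹ • d‖ ^ 2 - 1 / (2 * (1 - γ)) * ‖d‖ ^ 2 := by
  have : 1 - γ ≠ 0 := sub_ne_zero.2 hγ1.symm
  rw [norm_sub_sq_real, real_inner_smul_right, norm_smul, mul_pow, Real.norm_eq_abs, sq_abs]
  field_simp
  ring

end InnerProduct

section Subdifferential

open Filter Topology Pointwise

variable {f h : Euc p → EReal} {x y ξ : Euc p}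

lemma ProperFun.ne_top_of_mem_subdiff (hf : ProperFun f) (hξ : ξ ∈ Subdiff f x) : f x ≠ ⊤ := by
  obtain ⟨-, w, hw⟩ := hf
  intro htop
  have := hξ w
  rw [htop, EReal.top_add_coe, top_le_iff] at this
  exact hw this

lemma ProperFun.toReal_add_inner_le (hf : ProperFun f) (hξ : ξ ∈ Subdiff f x) (hy : f y ≠ ⊤) :
    (f x).toReal + ⟪ξ, y - x⟫_ℝ ≤ (f y).toReal := by
  have := hξ y
  rw [← EReal.coe_toReal (hf.ne_top_of_mem_subdiff hξ) (hf.1 x),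
    ← EReal.coe_toReal hy (hf.1 y)] at this
  exact_mod_cast this

lemma add_subdiff_subset : Subdiff f x + Subdiff h x ⊆ Subdiff (fun w => f w + h w) x := by
  rintro _ ⟨ξ, hξ, η, hη, rfl⟩ w
  calc f x + h x + ((⟪ξ + η, w - x⟫_ℝ : ℝ) : EReal)
      = (f x + ((⟪ξ, w - x⟫_ℝ : ℝ) : EReal)) + (h x + ((⟪η, w - x⟫_ℝ : ℝ) : EReal)) := by
        rw [inner_add_left, EReal.coe_add]
        abel
    _ ≤ f w + h w := add_le_add (hξ w) (hη w)

lemma le_sub_inner_of_mem_subdiff (hξ : ξ ∈ Subdiff f x) (w : Euc p) :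
    f x ≤ f w - ((⟪ξ, w - x⟫_ℝ : ℝ) : EReal) :=
  (EReal.le_sub_iff_add_le (.inl (EReal.coe_ne_bot _)) (.inl (EReal.coe_ne_top _))).2 (hξ w)

section ClosedGraph

variable {ι : Type*} {l : Filter ι} {x' ξ' : ι → Euc p}

lemma tendsto_sub_inner (hx : Tendsto x' l (𝓝 x)) (hξ : Tendsto ξ' l (𝓝 ξ)) (w : Euc p) :
    Tendsto (fun i => f w - ((⟪ξ' i, w - x' i⟫_ℝ : ℝ) : EReal)) l
      (𝓝 (f w - ((⟪ξ, w - x⟫_ℝ : ℝ) : EReal))) := by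
  have hinner : Tendsto (fun i => -((⟪ξ' i, w - x' i⟫_ℝ : ℝ) : EReal)) l
      (𝓝 (-((⟪ξ, w - x⟫_ℝ : ℝ) : EReal))) :=
    (continuous_neg.comp continuous_coe_real_ereal).continuousAt.tendsto.comp
      (hξ.inner (tendsto_const_nhds.sub hx))
  exact (EReal.continuousAt_add (p := (f w, -((⟪ξ, w - x⟫_ℝ : ℝ) : EReal)))
    (.inr (EReal.coe_ne_bot (-_))) (.inr (EReal.coe_ne_top (-_)))).tendsto.comp
      (tendsto_const_nhds.prodMk_nhds hinner)

lemma mem_subdiff_of_tendsto [l.NeBot] (hf : LowerSemicontinuous f)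
    (hmem : ∀ i, ξ' i ∈ Subdiff f (x' i)) (hx : Tendsto x' l (𝓝 x)) (hξ : Tendsto ξ' l (𝓝 ξ)) :
    ξ ∈ Subdiff f x := fun w =>
  EReal.add_le_of_le_sub <| hf.isClosed_epigraph.mem_of_tendsto
    (hx.prodMk_nhds (tendsto_sub_inner hx hξ w))
    (.of_forall fun i => le_sub_inner_of_mem_subdiff (hmem i) w)

lemma tendsto_of_mem_subdiff_of_tendsto (hf : LowerSemicontinuous f)
    (hmem : ∀ i, ξ' i ∈ Subdiff f (x' i)) (hx : Tendsto x' l (𝓝 x)) (hξ : Tendsto ξ' l (𝓝 ξ)) :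
    Tendsto (fun i => f (x' i)) l (𝓝 (f x)) := by
  have hupper := tendsto_sub_inner (f := f) hx hξ x
  rw [sub_self, inner_zero_right, EReal.coe_zero, sub_zero] at hupper
  refine tendsto_order.2 ⟨fun r hr => hx.eventually (hf x r hr), fun r hr => ?_⟩
  filter_upwards [hupper.eventually_lt_const hr] with i hi
  exact (le_sub_inner_of_mem_subdiff (hmem i) x).trans_lt hi

end ClosedGraph

end Subdifferential

section Prox

open Filter Topology

variable {f h : Euc p → EReal} {γ δ : ℝ}

lemma ProxObjMin.ne_top {x y : Euc p} (hf : ProperFun f) (hy : ProxObjMin f γ x y) :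
    f y ≠ ⊤ := by
  obtain ⟨-, w, hw⟩ := hf
  intro htop
  have := hy w
  rw [htop, EReal.top_add_coe, top_le_iff] at this
  exact EReal.add_ne_top hw (EReal.coe_ne_top _) this

lemma ProxObjMin.smul_sub_mem_subdiff {x y : Euc p} (hf : ProperFun f) (hconv : ConvexFun f)
    (hy : ProxObjMin f γ x y) : γ⁻¹ • (x - y) ∈ Subdiff f y := by
  intro w
  by_cases hw : f w = ⊤
  · exact hw ▸ le_top
  have hfy := EReal.coe_toReal (hy.ne_top hf) (hf.1 y)
  have hfw := EReal.coe_toReal hw (hf.1 w)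
  suffices (f y).toReal + ⟪γ⁻¹ • (x - y), w - y⟫_ℝ ≤ (f w).toReal by
    rw [← hfy, ← hfw]
    exact_mod_cast this
  -- Compare `y` with `y + τ (w - y)`, divide by `τ` and let `τ → 0`.
  refine le_of_forall_le_add_mul (c := 1 / (2 * γ) * ‖w - y‖ ^ 2) fun τ hτ hτ1 => ?_
  have hcompare : (f y).toReal + 1 / (2 * γ) * ‖y - x‖ ^ 2 ≤
      τ * (f w).toReal + (1 - τ) * (f y).toReal
        + 1 / (2 * γ) * ‖τ • w + (1 - τ) • y - x‖ ^ 2 := by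
    have := (hy (τ • w + (1 - τ) • y)).trans
      (add_le_add_left (hconv w y τ hτ.le hτ1) _)
    rw [← hfy, ← hfw] at this
    exact_mod_cast this
  have hsegment : τ • w + (1 - τ) • y - x = (y - x) + τ • (w - y) := by module
  rw [hsegment, norm_add_sq_real, norm_smul, mul_pow, Real.norm_eq_abs, sq_abs,
    real_inner_smul_right] at hcompare
  have hinner : ⟪γ⁻¹ • (x - y), w - y⟫_ℝ = -(γ⁻¹ * ⟪y - x, w - y⟫_ℝ) := by
    rw [real_inner_smul_left, ← neg_sub y x, inner_neg_left, mul_neg]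
  have hhalf : 1 / (2 * γ) = γ⁻¹ / 2 := by ring
  rw [hinner]
  rw [hhalf] at hcompare ⊢
  refine le_of_mul_le_mul_left ?_ hτ
  linarith

/-- The objective of `prox_{γf}(x)` at `y`; at `y = prox_{γf}(x)` it is the Moreau envelope
`f^γ(x)`. It is real-valued, hence meaningful only where `f y` is finite. -/
def proxValue (f : Euc p → EReal) (γ : ℝ) (x y : Euc p) : ℝ :=
  (f y).toReal + 1 / (2 * γ) * ‖y - x‖ ^ 2

/-- The objective `h + ‖· - s‖²/(2γ) - ‖· - t‖²/(2δ)` at `u`. For `γ < δ` its minimizer is the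
proximal point of `h` with parameter `γδ/(δ - γ)` at `(δs - γt)/(δ - γ)`. -/
def proxDiffValue (h : Euc p → EReal) (γ δ : ℝ) (s t u : Euc p) : ℝ :=
  proxValue h γ s u - 1 / (2 * δ) * ‖u - t‖ ^ 2

lemma proxValue_move (f : Euc p → EReal) (γ : ℝ) (x x' y y' : Euc p) :
    proxValue f γ x' y' = proxValue f γ x y' + γ⁻¹ * ⟪x - y, x' - x⟫_ℝ
      - γ⁻¹ * ⟪y' - y, x' - x⟫_ℝ + 1 / (2 * γ) * ‖x' - x‖ ^ 2 := by
  rw [proxValue, proxValue, norm_sub_sq_eq_add_of_move x x' y y']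
  ring

lemma proxValue_add_sq_le {x y w : Euc p} (hf : ProperFun f)
    (hy : γ⁻¹ • (x - y) ∈ Subdiff f y) (hw : f w ≠ ⊤) :
    proxValue f γ x y + 1 / (2 * γ) * ‖w - y‖ ^ 2 ≤ proxValue f γ x w := by
  have hsub := hf.toReal_add_inner_le hy hw
  rw [real_inner_smul_left] at hsub
  rw [proxValue, proxValue, norm_sub_sq_eq_sub_inner x y w]
  linear_combination hsub

lemma proxDiffValue_add_sq_le {s t u w : Euc p} (hh : ProperFun h)
    (hu : γ⁻¹ • (s - u) - δ⁻¹ • (t - u) ∈ Subdiff h u) (hw : h w ≠ ⊤) :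
    proxDiffValue h γ δ s t u + (1 / (2 * γ) - 1 / (2 * δ)) * ‖w - u‖ ^ 2
      ≤ proxDiffValue h γ δ s t w := by
  have hsub := hh.toReal_add_inner_le hu hw
  rw [inner_sub_left, real_inner_smul_left, real_inner_smul_left] at hsub
  rw [proxDiffValue, proxDiffValue, proxValue, proxValue, norm_sub_sq_eq_sub_inner s u w,
    norm_sub_sq_eq_sub_inner t u w]
  linear_combination hsub

lemma proxValue_le_quadratic_model {x x' y y' : Euc p} (hγ : 0 < γ) (hf : ProperFun f)
    (hy : f y ≠ ⊤) (hy' : γ⁻¹ • (x' - y') ∈ Subdiff f y') :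
    proxValue f γ x' y' ≤ proxValue f γ x y + γ⁻¹ * ⟪x - y, x' - x⟫_ℝ
      + 1 / (2 * γ) * ‖x' - x‖ ^ 2 := by
  have hmin := proxValue_add_sq_le hf hy' hy
  have hmove := proxValue_move f γ x x' y y
  rw [sub_self, inner_zero_left] at hmove
  have : 0 ≤ 1 / (2 * γ) * ‖y - y'‖ ^ 2 := by positivity
  linarith

lemma linear_model_le_proxValue {x x' y y' : Euc p} (hγ : 0 < γ) (hf : ProperFun f)
    (hy : γ⁻¹ • (x - y) ∈ Subdiff f y) (hy' : f y' ≠ ⊤) :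
    proxValue f γ x y + γ⁻¹ * ⟪x - y, x' - x⟫_ℝ ≤ proxValue f γ x' y' := by
  have hmin := proxValue_add_sq_le hf hy hy'
  have hmove := proxValue_move f γ x x' y y'
  have hsq : 0 ≤ 1 / (2 * γ) * ‖(y' - y) - (x' - x)‖ ^ 2 := by positivity
  rw [norm_sub_sq_real] at hsq
  linear_combination hmin + hsq - hmove

lemma quadratic_model_le_proxDiffValue {s s' t t' u u' : Euc p} (hγ : 0 < γ) (hγ1 : γ < 1)
    (hδ : 1 < δ) (hh : ProperFun h) (hu : γ⁻¹ • (s - u) - δ⁻¹ • (t - u) ∈ Subdiff h u)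
    (hu' : h u' ≠ ⊤) :
    proxDiffValue h γ δ s t u + γ⁻¹ * ⟪s - u, s' - s⟫_ℝ - δ⁻¹ * ⟪t - u, t' - t⟫_ℝ
        - 1 / (2 * (1 - γ)) * ‖s' - s‖ ^ 2 - 1 / (2 * (δ - 1)) * ‖t' - t‖ ^ 2
      ≤ proxDiffValue h γ δ s' t' u' := by
  have hmin := proxDiffValue_add_sq_le hh hu hu'
  have hmove : proxDiffValue h γ δ s' t' u' = proxDiffValue h γ δ s t u'
      + (γ⁻¹ * ⟪s - u, s' - s⟫_ℝ - γ⁻¹ * ⟪u' - u, s' - s⟫_ℝ + 1 / (2 * γ) * ‖s' - s‖ ^ 2)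
      - (δ⁻¹ * ⟪t - u, t' - t⟫_ℝ - δ⁻¹ * ⟪u' - u, t' - t⟫_ℝ + 1 / (2 * δ) * ‖t' - t‖ ^ 2) := by
    rw [proxDiffValue, proxDiffValue, proxValue_move h γ s s' u u',
      norm_sub_sq_eq_add_of_move t t' u u']
    ring
  have hsquare_s := complete_square_prox hγ.ne' hγ1.ne (u' - u) (s' - s)
  have hsquare_t := complete_square_prox (by linarith) hδ.ne' (u' - u) (t' - t)
  have hs : 0 ≤ (1 - γ) / (2 * γ) * ‖(u' - u) - (1 - γ)⁻¹ • (s' - s)‖ ^ 2 :=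
    mul_nonneg (div_nonneg (by linarith) (by linarith)) (sq_nonneg _)
  have ht : (1 - δ) / (2 * δ) * ‖(u' - u) - (1 - δ)⁻¹ • (t' - t)‖ ^ 2 ≤ 0 :=
    mul_nonpos_of_nonpos_of_nonneg
      (div_nonpos_of_nonpos_of_nonneg (by linarith) (by linarith)) (sq_nonneg _)
  have hflip : 1 / (2 * (δ - 1)) = -(1 / (2 * (1 - δ))) := by
    rw [← neg_sub 1 δ, mul_neg, div_neg]
  rw [hflip]
  linarith

lemma tendsto_proxValue {ι : Type*} {l : Filter ι} [l.NeBot] {x' y' ξ' : ι → Euc p}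
    {x y ξ : Euc p} (γ : ℝ) (hf : ProperFun f) (hlsc : LowerSemicontinuous f)
    (hmem : ∀ i, ξ' i ∈ Subdiff f (y' i)) (hξ : Tendsto ξ' l (𝓝 ξ)) (hx : Tendsto x' l (𝓝 x))
    (hy : Tendsto y' l (𝓝 y)) :
    Tendsto (fun i => proxValue f γ (x' i) (y' i)) l (𝓝 (proxValue f γ x y)) := by
  have hfy := hf.ne_top_of_mem_subdiff (mem_subdiff_of_tendsto hlsc hmem hy hξ)
  have hval : Tendsto (fun i => (f (y' i)).toReal) l (𝓝 (f y).toReal) :=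
    (EReal.tendsto_toReal hfy (hf.1 y)).comp (tendsto_of_mem_subdiff_of_tendsto hlsc hmem hy hξ)
  exact hval.add (((hy.sub hx).norm.pow 2).const_mul _)

lemma inv_smul_proxDiff_center (hγ : γ ≠ 0) (hδ : δ ≠ 0) (hγδ : γ ≠ δ) {E : Type*}
    [AddCommGroup E] [Module ℝ E] (s t u : E) :
    (γ * δ / (δ - γ))⁻¹ • ((δ - γ)⁻¹ • (δ • s - γ • t) - u)
      = γ⁻¹ • (s - u) - δ⁻¹ • (t - u) := by
  have : δ - γ ≠ 0 := sub_ne_zero.2 hγδ.symm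
  match_scalars <;> field_simp
  ring

end Prox

section Iteration

open Filter Topology Pointwise

variable {f g h : Euc p → EReal} {γ δ lam mu : ℝ} {s t u v z : ℕ → Euc p}

/-- The admissible prox parameters `γ, δ` and relaxation parameters `lam, mu` of the three-prox
iteration. -/
structure AdmissibleParams (γ δ lam mu : ℝ) : Prop where
  γ_pos : 0 < γ
  γ_lt_one : γ < 1
  one_lt_δ : 1 < δ
  lam_pos : 0 < lam
  lam_lt : lam < 2 * (1 - γ)
  mu_pos : 0 < mu
  mu_lt : mu < 2 * (1 - δ⁻¹)

/-- An orbit of the three-prox iteration for `g - h - f`, each proximal step being encoded by its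
optimality condition. -/
structure IsThreeProxOrbit (f g h : Euc p → EReal) (γ δ lam mu : ℝ)
    (s t u v z : ℕ → Euc p) : Prop where
  mem_subdiff_f : ∀ k, δ⁻¹ • (t k - z k) ∈ Subdiff f (z k)
  mem_subdiff_g : ∀ k, γ⁻¹ • (s k - v k) ∈ Subdiff g (v k)
  mem_subdiff_h : ∀ k, γ⁻¹ • (s k - u k) - δ⁻¹ • (t k - u k) ∈ Subdiff h (u k)
  s_succ : ∀ k, s (k + 1) = s k + lam • (v k - u k)
  t_succ : ∀ k, t (k + 1) = t k + mu • (u k - z k)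

/-- The Lyapunov function of the three-prox iteration: with `u, v, z` the proximal points of
`s, t`, the envelope of `g - h - f` at `(s, t)`. -/
def threeProxEnergy (f g h : Euc p → EReal) (γ δ : ℝ) (s t u v z : Euc p) : ℝ :=
  proxValue g γ s v - proxDiffValue h γ δ s t u - proxValue f δ t z

lemma threeProxEnergy_diag (f g h : Euc p → EReal) (γ δ : ℝ) (s t x : Euc p) :
    threeProxEnergy f g h γ δ s t x x x = (g x).toReal - (h x).toReal - (f x).toReal := by
  simp only [threeProxEnergy, proxDiffValue, proxValue]
  ring

lemma dc3Val_eq_coe {x : Euc p} (hf : ProperFun f) (hg : ProperFun g) (hh : ProperFun h)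
    (hfx : f x ≠ ⊤) (hgx : g x ≠ ⊤) (hhx : h x ≠ ⊤) :
    dc3Val g h f x = (((g x).toReal - (h x).toReal - (f x).toReal : ℝ) : EReal) := by
  rw [dc3Val, if_neg hgx, EReal.coe_sub, EReal.coe_sub, EReal.coe_toReal hgx (hg.1 x),
    EReal.coe_toReal hhx (hh.1 x), EReal.coe_toReal hfx (hf.1 x)]

lemma ne_top_of_bot_lt_dc3Val {x : Euc p} (hφ : ⊥ < dc3Val g h f x) (hgx : g x ≠ ⊤) :
    h x ≠ ⊤ ∧ f x ≠ ⊤ := by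
  rw [dc3Val, if_neg hgx] at hφ
  refine ⟨fun hhx => ?_, fun hfx => ?_⟩
  · simp [hhx] at hφ
  · simp [hfx] at hφ

lemma AdmissibleParams.lam_coeff_pos (hp : AdmissibleParams γ δ lam mu) :
    0 < lam / γ * (1 - lam / (2 * (1 - γ))) := by
  obtain ⟨hγ, hγ1, -, hlam, hlam_lt, -, -⟩ := hp
  have : lam / (2 * (1 - γ)) < 1 := (div_lt_one (by linarith)).2 hlam_lt
  exact mul_pos (div_pos hlam hγ) (sub_pos.2 this)

lemma AdmissibleParams.mu_coeff_pos (hp : AdmissibleParams γ δ lam mu) :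
    0 < mu / δ * (1 - mu / (2 * (1 - δ⁻¹))) := by
  obtain ⟨-, -, hδ, -, -, hmu, hmu_lt⟩ := hp
  have : mu / (2 * (1 - δ⁻¹)) < 1 := (div_lt_one (hmu.trans hmu_lt)).2 hmu_lt
  exact mul_pos (div_pos hmu (by linarith)) (sub_pos.2 this)

lemma lam_coeff_eq (hγ : γ ≠ 0) (hγ1 : γ ≠ 1) :
    lam / γ * (1 - lam / (2 * (1 - γ)))
      = γ⁻¹ * lam - (1 / (2 * γ) + 1 / (2 * (1 - γ))) * lam ^ 2 := by
  have : 1 - γ ≠ 0 := sub_ne_zero.2 hγ1.symm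
  field_simp
  ring

lemma mu_coeff_eq (hδ : δ ≠ 0) (hδ1 : δ ≠ 1) :
    mu / δ * (1 - mu / (2 * (1 - δ⁻¹))) = δ⁻¹ * mu - 1 / (2 * (δ - 1)) * mu ^ 2 := by
  have : δ - 1 ≠ 0 := sub_ne_zero.2 hδ1
  have hinv : 1 - δ⁻¹ = (δ - 1) / δ := by field_simp
  rw [hinv]
  field_simp

namespace IsThreeProxOrbit

lemma of_isProxOf (hγ : 0 < γ) (hγδ : γ < δ)
    (hf : ProperFun f) (hf_convex : ConvexFun f) (hg : ProperFun g) (hg_convex : ConvexFun g)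
    (hh : ProperFun h) (hh_convex : ConvexFun h)
    (hu : ∀ k, IsProxOf h (γ * δ / (δ - γ)) ((δ - γ)⁻¹ • (δ • s k - γ • t k)) (u k))
    (hv : ∀ k, IsProxOf g γ (s k) (v k)) (hz : ∀ k, IsProxOf f δ (t k) (z k))
    (hs : ∀ k, s (k + 1) = s k + lam • (v k - u k))
    (ht : ∀ k, t (k + 1) = t k + mu • (u k - z k)) :
    IsThreeProxOrbit f g h γ δ lam mu s t u v z where
  mem_subdiff_f k := (hz k).1.smul_sub_mem_subdiff hf hf_convex
  mem_subdiff_g k := (hv k).1.smul_sub_mem_subdiff hg hg_convex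
  mem_subdiff_h k := by
    have := (hu k).1.smul_sub_mem_subdiff hh hh_convex
    rwa [inv_smul_proxDiff_center hγ.ne' (hγ.trans hγδ).ne' hγδ.ne] at this
  s_succ := hs
  t_succ := ht

lemma energy_succ_add_le (horb : IsThreeProxOrbit f g h γ δ lam mu s t u v z)
    (hγ : 0 < γ) (hγ1 : γ < 1) (hδ : 1 < δ) (hf : ProperFun f) (hg : ProperFun g)
    (hh : ProperFun h) (k : ℕ) :
    threeProxEnergy f g h γ δ (s (k + 1)) (t (k + 1)) (u (k + 1)) (v (k + 1)) (z (k + 1))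
        + (lam / γ * (1 - lam / (2 * (1 - γ))) * ‖u k - v k‖ ^ 2
          + mu / δ * (1 - mu / (2 * (1 - δ⁻¹))) * ‖u k - z k‖ ^ 2)
      ≤ threeProxEnergy f g h γ δ (s k) (t k) (u k) (v k) (z k) := by
  have hδ0 : 0 < δ := by linarith
  have hg_model := proxValue_le_quadratic_model (x := s k) hγ hg
    (hg.ne_top_of_mem_subdiff (horb.mem_subdiff_g k)) (horb.mem_subdiff_g (k + 1))
  have hf_model := linear_model_le_proxValue (x' := t (k + 1)) hδ0 hf (horb.mem_subdiff_f k)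
    (hf.ne_top_of_mem_subdiff (horb.mem_subdiff_f (k + 1)))
  have hh_model := quadratic_model_le_proxDiffValue (s' := s (k + 1)) (t' := t (k + 1))
    hγ hγ1 hδ hh (horb.mem_subdiff_h k) (hh.ne_top_of_mem_subdiff (horb.mem_subdiff_h (k + 1)))
  have hlinear_s : ⟪s k - v k, s (k + 1) - s k⟫_ℝ - ⟪s k - u k, s (k + 1) - s k⟫_ℝ
      = -(lam * ‖u k - v k‖ ^ 2) := by
    rw [← inner_sub_left, sub_sub_sub_cancel_left, horb.s_succ, add_sub_cancel_left,
      real_inner_smul_right, ← neg_sub (u k) (v k), inner_neg_right, real_inner_self_eq_norm_sq,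
      mul_neg]
  have hlinear_t : ⟪t k - z k, t (k + 1) - t k⟫_ℝ - ⟪t k - u k, t (k + 1) - t k⟫_ℝ
      = mu * ‖u k - z k‖ ^ 2 := by
    rw [← inner_sub_left, sub_sub_sub_cancel_left, horb.t_succ, add_sub_cancel_left,
      real_inner_smul_right, real_inner_self_eq_norm_sq]
  have hnorm_s : ‖s (k + 1) - s k‖ ^ 2 = lam ^ 2 * ‖u k - v k‖ ^ 2 := by
    rw [horb.s_succ, add_sub_cancel_left, norm_smul, mul_pow, Real.norm_eq_abs, sq_abs,
      norm_sub_rev]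
  have hnorm_t : ‖t (k + 1) - t k‖ ^ 2 = mu ^ 2 * ‖u k - z k‖ ^ 2 := by
    rw [horb.t_succ, add_sub_cancel_left, norm_smul, mul_pow, Real.norm_eq_abs, sq_abs]
  rw [hnorm_s] at hg_model hh_model
  rw [hnorm_t] at hh_model
  rw [threeProxEnergy, threeProxEnergy, lam_coeff_eq hγ.ne' hγ1.ne, mu_coeff_eq hδ0.ne' hδ.ne']
  linear_combination hg_model + hh_model + hf_model + γ⁻¹ * hlinear_s - δ⁻¹ * hlinear_t

lemma le_energy (horb : IsThreeProxOrbit f g h γ δ lam mu s t u v z)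
    (hγ : 0 < γ) (hγδ : γ ≤ δ) (hf : ProperFun f) (hg : ProperFun g) (hh : ProperFun h)
    {c : ℝ} (hc : ∀ x, c ≤ dc3Val g h f x) (k : ℕ) :
    c ≤ threeProxEnergy f g h γ δ (s k) (t k) (u k) (v k) (z k) := by
  have hgv := hg.ne_top_of_mem_subdiff (horb.mem_subdiff_g k)
  obtain ⟨hhv, hfv⟩ := ne_top_of_bot_lt_dc3Val ((EReal.bot_lt_coe c).trans_le (hc _)) hgv
  have hcv := hc (v k)
  rw [dc3Val_eq_coe hf hg hh hfv hgv hhv, EReal.coe_le_coe_iff,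
    ← threeProxEnergy_diag f g h γ δ (s k) (t k)] at hcv
  have hf_min : proxValue f δ (t k) (z k) ≤ proxValue f δ (t k) (v k) := by
    have : 0 ≤ 1 / (2 * δ) * ‖v k - z k‖ ^ 2 :=
      mul_nonneg (one_div_nonneg.2 (by linarith)) (sq_nonneg _)
    linarith [proxValue_add_sq_le hf (horb.mem_subdiff_f k) hfv]
  have hh_min : proxDiffValue h γ δ (s k) (t k) (u k)
      ≤ proxDiffValue h γ δ (s k) (t k) (v k) := by
    have : 0 ≤ (1 / (2 * γ) - 1 / (2 * δ)) * ‖v k - u k‖ ^ 2 :=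
      mul_nonneg (sub_nonneg.2 (by gcongr)) (sq_nonneg _)
    linarith [proxDiffValue_add_sq_le hh (horb.mem_subdiff_h k) hhv]
  exact hcv.trans (sub_le_sub (sub_le_sub_left hh_min _) hf_min)

lemma summable_residual (horb : IsThreeProxOrbit f g h γ δ lam mu s t u v z)
    (hp : AdmissibleParams γ δ lam mu) (hf : ProperFun f) (hg : ProperFun g) (hh : ProperFun h)
    {c : ℝ} (hc : ∀ x, c ≤ dc3Val g h f x) :
    Summable fun k => ‖u k - v k‖ ^ 2 + ‖u k - z k‖ ^ 2 := by
  have hweight_s := hp.lam_coeff_pos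
  have hweight_t := hp.mu_coeff_pos
  have hweighted := summable_of_add_le_of_forall_ge (fun k => by positivity)
    (horb.le_energy hp.γ_pos (hp.γ_lt_one.trans hp.one_lt_δ).le hf hg hh hc)
    (horb.energy_succ_add_le hp.γ_pos hp.γ_lt_one hp.one_lt_δ hf hg hh)
  refine .add ?_ ?_
  · refine (summable_mul_left_iff hweight_s.ne').1
      (hweighted.of_nonneg_of_le (fun k => by positivity) fun k => ?_)
    exact le_add_of_nonneg_right (by positivity)
  · refine (summable_mul_left_iff hweight_t.ne').1
      (hweighted.of_nonneg_of_le (fun k => by positivity) fun k => ?_)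
    exact le_add_of_nonneg_left (by positivity)

lemma exists_tendsto_energy (horb : IsThreeProxOrbit f g h γ δ lam mu s t u v z)
    (hp : AdmissibleParams γ δ lam mu) (hf : ProperFun f) (hg : ProperFun g) (hh : ProperFun h)
    {c : ℝ} (hc : ∀ x, c ≤ dc3Val g h f x) :
    ∃ L, Tendsto (fun k => threeProxEnergy f g h γ δ (s k) (t k) (u k) (v k) (z k)) atTop
      (𝓝 L) := by
  have hweight_s := hp.lam_coeff_pos
  have hweight_t := hp.mu_coeff_pos
  refine ⟨_, tendsto_atTop_ciInf (antitone_nat_of_succ_le fun k => ?_)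
    ⟨c, Set.forall_mem_range.2
      (horb.le_energy hp.γ_pos (hp.γ_lt_one.trans hp.one_lt_δ).le hf hg hh hc)⟩⟩
  exact (le_add_of_nonneg_right (by positivity)).trans
    (horb.energy_succ_add_le hp.γ_pos hp.γ_lt_one hp.one_lt_δ hf hg hh k)

lemma tendsto_energy_comp (horb : IsThreeProxOrbit f g h γ δ lam mu s t u v z)
    (hf : ProperFun f) (hf_lsc : LowerSemicontinuous f) (hg : ProperFun g)
    (hg_lsc : LowerSemicontinuous g) (hh : ProperFun h) (hh_lsc : LowerSemicontinuous h)
    {ι : Type*} {l : Filter ι} [l.NeBot] {ψ : ι → ℕ} {s₀ t₀ u₀ v₀ z₀ : Euc p}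
    (hs : Tendsto (s ∘ ψ) l (𝓝 s₀)) (ht : Tendsto (t ∘ ψ) l (𝓝 t₀))
    (hu : Tendsto (u ∘ ψ) l (𝓝 u₀)) (hv : Tendsto (v ∘ ψ) l (𝓝 v₀))
    (hz : Tendsto (z ∘ ψ) l (𝓝 z₀)) :
    Tendsto (fun i => threeProxEnergy f g h γ δ (s (ψ i)) (t (ψ i)) (u (ψ i)) (v (ψ i)) (z (ψ i)))
      l (𝓝 (threeProxEnergy f g h γ δ s₀ t₀ u₀ v₀ z₀)) := by
  have hf_lim := tendsto_proxValue δ hf hf_lsc (fun i => horb.mem_subdiff_f (ψ i))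
    ((ht.sub hz).const_smul _) ht hz
  have hg_lim := tendsto_proxValue γ hg hg_lsc (fun i => horb.mem_subdiff_g (ψ i))
    ((hs.sub hv).const_smul _) hs hv
  have hh_lim := tendsto_proxValue γ hh hh_lsc (fun i => horb.mem_subdiff_h (ψ i))
    (((hs.sub hu).const_smul _).sub ((ht.sub hu).const_smul _)) hs hu
  exact (hg_lim.sub (hh_lim.sub (((hu.sub ht).norm.pow 2).const_mul _))).sub hf_lim

lemma mem_subdiff_of_tendsto_comp (horb : IsThreeProxOrbit f g h γ δ lam mu s t u v z)
    (hf : LowerSemicontinuous f) (hg : LowerSemicontinuous g) (hh : LowerSemicontinuous h)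
    {ι : Type*} {l : Filter ι} [l.NeBot] {ψ : ι → ℕ} {s₀ t₀ u₀ v₀ z₀ : Euc p}
    (hs : Tendsto (s ∘ ψ) l (𝓝 s₀)) (ht : Tendsto (t ∘ ψ) l (𝓝 t₀))
    (hu : Tendsto (u ∘ ψ) l (𝓝 u₀)) (hv : Tendsto (v ∘ ψ) l (𝓝 v₀))
    (hz : Tendsto (z ∘ ψ) l (𝓝 z₀)) :
    δ⁻¹ • (t₀ - z₀) ∈ Subdiff f z₀ ∧ γ⁻¹ • (s₀ - v₀) ∈ Subdiff g v₀ ∧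
      γ⁻¹ • (s₀ - u₀) - δ⁻¹ • (t₀ - u₀) ∈ Subdiff h u₀ :=
  ⟨mem_subdiff_of_tendsto hf (fun i => horb.mem_subdiff_f (ψ i)) hz ((ht.sub hz).const_smul _),
    mem_subdiff_of_tendsto hg (fun i => horb.mem_subdiff_g (ψ i)) hv ((hs.sub hv).const_smul _),
    mem_subdiff_of_tendsto hh (fun i => horb.mem_subdiff_h (ψ i)) hu
      (((hs.sub hu).const_smul _).sub ((ht.sub hu).const_smul _))⟩

lemma critical_of_mapClusterPt (horb : IsThreeProxOrbit f g h γ δ lam mu s t u v z)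
    (hf : ProperFun f) (hf_lsc : LowerSemicontinuous f) (hg : ProperFun g)
    (hg_lsc : LowerSemicontinuous g) (hh : ProperFun h) (hh_lsc : LowerSemicontinuous h)
    (huv : Tendsto (fun k => u k - v k) atTop (𝓝 0))
    (huz : Tendsto (fun k => u k - z k) atTop (𝓝 0)) {L : ℝ}
    (hL : Tendsto (fun k => threeProxEnergy f g h γ δ (s k) (t k) (u k) (v k) (z k)) atTop
      (𝓝 L))
    (hs : Bornology.IsBounded (Set.range s)) (ht : Bornology.IsBounded (Set.range t))
    {x : Euc p} (hx : MapClusterPt x atTop u) :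
    (Subdiff g x ∩ (Subdiff f x + Subdiff h x)).Nonempty ∧ dc3Val g h f x = L := by
  have hst : Bornology.IsBounded (Set.range fun k => (s k, t k)) :=
    (hs.prod ht).subset (Set.range_subset_iff.2 fun k => ⟨⟨k, rfl⟩, ⟨k, rfl⟩⟩)
  obtain ⟨⟨s₀, t₀⟩, ψ, hψ, hu_lim, hst_lim⟩ := exists_tendsto_subseq_of_mapClusterPt hx hst
  have hs_lim : Tendsto (s ∘ ψ) atTop (𝓝 s₀) := hst_lim.fst_nhds
  have ht_lim : Tendsto (t ∘ ψ) atTop (𝓝 t₀) := hst_lim.snd_nhds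
  have hv_lim : Tendsto (v ∘ ψ) atTop (𝓝 x) := by
    simpa [Function.comp_def] using hu_lim.sub (huv.comp hψ.tendsto_atTop)
  have hz_lim : Tendsto (z ∘ ψ) atTop (𝓝 x) := by
    simpa [Function.comp_def] using hu_lim.sub (huz.comp hψ.tendsto_atTop)
  obtain ⟨hf_mem, hg_mem, hh_mem⟩ := horb.mem_subdiff_of_tendsto_comp hf_lsc hg_lsc hh_lsc
    hs_lim ht_lim hu_lim hv_lim hz_lim
  have henergy : threeProxEnergy f g h γ δ s₀ t₀ x x x = L :=
    tendsto_nhds_unique (horb.tendsto_energy_comp hf hf_lsc hg hg_lsc hh hh_lsc hs_lim ht_lim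
      hu_lim hv_lim hz_lim) (hL.comp hψ.tendsto_atTop)
  have hsum_mem : γ⁻¹ • (s₀ - x) ∈ Subdiff f x + Subdiff h x :=
    add_sub_cancel (δ⁻¹ • (t₀ - x)) (γ⁻¹ • (s₀ - x)) ▸ Set.add_mem_add hf_mem hh_mem
  refine ⟨⟨_, hg_mem, hsum_mem⟩, ?_⟩
  rw [dc3Val_eq_coe hf hg hh (hf.ne_top_of_mem_subdiff hf_mem) (hg.ne_top_of_mem_subdiff hg_mem)
    (hh.ne_top_of_mem_subdiff hh_mem), ← threeProxEnergy_diag f g h γ δ s₀ t₀, henergy]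

end IsThreeProxOrbit

end Iteration

open Filter Pointwise in
/-- convergence of the three-prox algorithm for `φ = g − h − f`. -/
theorem statement19
    (f g h : Euc p → EReal)
    (hf_proper : ProperFun f) (hf_convex : ConvexFun f) (hf_lsc : LowerSemicontinuous f)
    (hg_proper : ProperFun g) (hg_convex : ConvexFun g) (hg_lsc : LowerSemicontinuous g)
    (hh_proper : ProperFun h) (hh_convex : ConvexFun h) (hh_lsc : LowerSemicontinuous h)
    (hlb : ∃ c : ℝ, ∀ x, (c : EReal) ≤ dc3Val g h f x)
    (γ δ : ℝ) (hγ : 0 < γ) (hγ1 : γ < 1) (hδ : 1 < δ)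
    (lam mu : ℝ) (hlam0 : 0 < lam) (hlam2 : lam < 2 * (1 - γ))
    (hmu0 : 0 < mu) (hmu2 : mu < 2 * (1 - δ⁻¹))
    (s t u v z : ℕ → Euc p)
    (hu : ∀ k, IsProxOf h (γ*δ/(δ-γ)) ((δ - γ)⁻¹ • (δ • s k - γ • t k)) (u k))
    (hv : ∀ k, IsProxOf g γ (s k) (v k))
    (hz : ∀ k, IsProxOf f δ (t k) (z k))
    (hs : ∀ k, s (k+1) = s k + lam • (v k - u k))
    (ht : ∀ k, t (k+1) = t k + mu • (u k - z k)) :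
    Tendsto (fun k : ℕ =>
        ((k : ℝ) + 1) * ⨅ i : Fin (k+1), (‖u i - v i‖^2 + ‖u i - z i‖^2))
      atTop (nhds 0) ∧
    {x : Euc p | MapClusterPt x atTop u} = {x : Euc p | MapClusterPt x atTop v} ∧
    {x : Euc p | MapClusterPt x atTop u} = {x : Euc p | MapClusterPt x atTop z} ∧
    (Bornology.IsBounded (Set.range s) → Bornology.IsBounded (Set.range t) →
      (∀ ustar : Euc p, MapClusterPt ustar atTop u →
        (Subdiff g ustar ∩ (Subdiff f ustar + Subdiff h ustar)).Nonempty ∧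
          (Subdiff g ustar ∩ Subdiff (fun x => f x + h x) ustar).Nonempty) ∧
      (∀ x y : Euc p, MapClusterPt x atTop u → MapClusterPt y atTop u →
        dc3Val g h f x = dc3Val g h f y)) := by
  obtain ⟨c, hc⟩ := hlb
  have hp : AdmissibleParams γ δ lam mu := ⟨hγ, hγ1, hδ, hlam0, hlam2, hmu0, hmu2⟩
  have horb : IsThreeProxOrbit f g h γ δ lam mu s t u v z :=
    .of_isProxOf hγ (hγ1.trans hδ) hf_proper hf_convex hg_proper hg_convex hh_proper hh_convex
      hu hv hz hs ht
  have hsum := horb.summable_residual hp hf_proper hg_proper hh_proper hc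
  have huv : Tendsto (fun k => u k - v k) atTop (nhds 0) :=
    tendsto_zero_of_summable_norm_sq <| hsum.of_nonneg_of_le (fun k => sq_nonneg _)
      fun k => le_add_of_nonneg_right (sq_nonneg _)
  have huz : Tendsto (fun k => u k - z k) atTop (nhds 0) :=
    tendsto_zero_of_summable_norm_sq <| hsum.of_nonneg_of_le (fun k => sq_nonneg _)
      fun k => le_add_of_nonneg_left (sq_nonneg _)
  obtain ⟨L, hL⟩ := horb.exists_tendsto_energy hp hf_proper hg_proper hh_proper hc
  have hmin := tendsto_succ_mul_iInf_of_summable (fun k => by positivity) hsum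
  refine ⟨hmin, Set.ext (mapClusterPt_iff_of_tendsto_sub huv),
    Set.ext (mapClusterPt_iff_of_tendsto_sub huz), fun hs_bdd ht_bdd => ?_⟩
  have hcluster := fun x (hx : MapClusterPt x atTop u) => horb.critical_of_mapClusterPt hf_proper
    hf_lsc hg_proper hg_lsc hh_proper hh_lsc huv huz hL hs_bdd ht_bdd hx
  exact ⟨fun x hx => ⟨(hcluster x hx).1,
      (hcluster x hx).1.mono (Set.inter_subset_inter_right _ add_subdiff_subset)⟩,
    fun x y hx hy => (hcluster x hx).2.trans (hcluster y hy).2.symm⟩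
end
end
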